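/- Let N ≥ 3, α ∈ ((N−4)₊, N) and 2 ≤ p < (N+α)/(N−2). For every M > 0 and every δ > 0 there exists a constant C = C_δ(M) > 0 such that for all smooth compactly supported u, v : ℝ^N → ℂ with ‖u‖_{H¹} ≤ M and ‖v‖_{H¹} ≤ M, | ∫_{ℝ^N} (I_α ∗ |u|^p)(x) |u(x)|^p dx − ∫_{ℝ^N} (I_α ∗ |v|^p)(x) |v(x)|^p dx | ≤ δ + C ‖u − v‖_{L²}. -/

import Mathlib

open MeasureTheory Real
open scoped BigOperators

/-- The squared Euclidean norm of the gradient: `∑ i |∂ᵢ u(x)|²`. -/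
noncomputable def gradSq {N : ℕ} {F : Type*} [NormedAddCommGroup F] [NormedSpace ℝ F]
    (u : EuclideanSpace ℝ (Fin N) → F) (x : EuclideanSpace ℝ (Fin N)) : ℝ :=
  ∑ i, ‖fderiv ℝ u x (EuclideanSpace.single i 1)‖ ^ 2

/-- The normalization constant `𝒜 = Γ((N−α)/2) / (Γ(α/2) π^{N/2} 2^α)` of
the Riesz potential `I_α(x) = 𝒜 |x|^{α−N}`. -/
noncomputable def rieszConst (N : ℕ) (α : ℝ) : ℝ :=
  Real.Gamma (((N : ℝ) - α) / 2) /
    (Real.Gamma (α / 2) * Real.pi ^ ((N : ℝ) / 2) * 2 ^ α)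

/-- The Riesz convolution `(I_α ∗ |u|^p)(x) = ∫ I_α(x−y) |u(y)|^p dy`. -/
noncomputable def rieszConv (N : ℕ) (α p : ℝ) (u : EuclideanSpace ℝ (Fin N) → ℂ)
    (x : EuclideanSpace ℝ (Fin N)) : ℝ :=
  ∫ y, rieszConst N α * ‖x - y‖ ^ (α - (N : ℝ)) * ‖u y‖ ^ p

/-- The Choquard nonlocal term `∫ (I_α ∗ |u|^p)(x) |u(x)|^p dx`. -/
noncomputable def choquardTerm (N : ℕ) (α p : ℝ)
    (u : EuclideanSpace ℝ (Fin N) → ℂ) : ℝ :=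
  ∫ x, rieszConv N α p u x * ‖u x‖ ^ p

/-- The `H¹` norm `(∫ (|u|² + |∇u|²))^{1/2}`. -/
noncomputable def H1Norm {N : ℕ} (u : EuclideanSpace ℝ (Fin N) → ℂ) : ℝ :=
  Real.sqrt (∫ x, (‖u x‖ ^ 2 + gradSq u x))

abbrev ChE (N : ℕ) := EuclideanSpace ℝ (Fin N)

lemma ch_amgm {r F k G ε : ℝ} (hr1 : 1 < r) (hr2 : r < 2) (hF : 0 ≤ F) (hk : 0 ≤ k) (hG : 0 ≤ G)
    (hε : 0 < ε) : k * (F * G) ≤ ε * (k ^ (r / (2 * (r - 1))) * (F ^ r / ε ^ r)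
      + k ^ (r / (2 * (r - 1))) * G ^ r + F ^ r / ε ^ r * G ^ r) := by
  have key : ∀ F : ℝ, 0 ≤ F → k * (F * G) ≤ k ^ (r / (2 * (r - 1))) * F ^ r
      + k ^ (r / (2 * (r - 1))) * G ^ r + F ^ r * G ^ r := by
    intro F hF
    rcases hF.eq_or_lt with rfl | hF
    · rw [zero_mul, mul_zero]; positivity
    rcases hk.eq_or_lt with rfl | hk
    · rw [zero_mul]; positivity
    rcases hG.eq_or_lt with rfl | hG
    · rw [mul_zero, mul_zero]; positivity
    have hr0 : 0 < r := by linarith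
    have hri : 1 / r < 1 := by rw [div_lt_one hr0]; exact hr1
    have hri2 : 1 / 2 < 1 / r := one_div_lt_one_div_of_lt hr0 hr2
    have h := Real.geom_mean_le_arith_mean3_weighted (w₁ := 1 - 1 / r) (w₂ := 1 - 1 / r)
      (w₃ := 2 * (1 / r) - 1) (p₁ := k ^ (r / (2 * (r - 1))) * F ^ r)
      (p₂ := k ^ (r / (2 * (r - 1))) * G ^ r) (p₃ := F ^ r * G ^ r) (by linarith) (by linarith)
      (by linarith) (by positivity) (by positivity) (by positivity) (by ring)
    have e : k * (F * G) = (k ^ (r / (2 * (r - 1))) * F ^ r) ^ (1 - 1 / r) *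
        (k ^ (r / (2 * (r - 1))) * G ^ r) ^ (1 - 1 / r) * (F ^ r * G ^ r) ^ (2 * (1 / r) - 1) := by
      rw [Real.mul_rpow (by positivity) (by positivity), Real.mul_rpow (by positivity) (by positivity),
        Real.mul_rpow (by positivity) (by positivity)]
      simp only [← Real.rpow_mul hk.le, ← Real.rpow_mul hF.le, ← Real.rpow_mul hG.le]
      have h1 : k = k ^ (r / (2 * (r - 1)) * (1 - 1 / r)) * k ^ (r / (2 * (r - 1)) * (1 - 1 / r)) := by
        rw [← Real.rpow_add hk]
        have : r / (2 * (r - 1)) * (1 - 1 / r) + r / (2 * (r - 1)) * (1 - 1 / r) = 1 := by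
          have : r - 1 ≠ 0 := by linarith
          field_simp
          try ring
        rw [this, Real.rpow_one]
      have h2 : ∀ X : ℝ, 0 < X → X = X ^ (r * (1 - 1 / r)) * X ^ (r * (2 * (1 / r) - 1)) := by
        intro X hX
        rw [← Real.rpow_add hX]
        have : r * (1 - 1 / r) + r * (2 * (1 / r) - 1) = 1 := by
          field_simp
          try ring
        rw [this, Real.rpow_one]
      conv_lhs => rw [h1, h2 F hF, h2 G hG]
      ring
    rw [e]
    refine h.trans ?_
    have a1 : 0 ≤ k ^ (r / (2 * (r - 1))) * F ^ r := by positivity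
    have a2 : 0 ≤ k ^ (r / (2 * (r - 1))) * G ^ r := by positivity
    have a3 : 0 ≤ F ^ r * G ^ r := by positivity
    have hrp : 0 < 1 / r := by positivity
    have b1 := mul_le_mul_of_nonneg_right (show 1 - 1 / r ≤ 1 by linarith) a1
    have b2 := mul_le_mul_of_nonneg_right (show 1 - 1 / r ≤ 1 by linarith) a2
    have b3 := mul_le_mul_of_nonneg_right (show 2 * (1 / r) - 1 ≤ 1 by linarith) a3
    linarith
  have h := key (F / ε) (by positivity)
  rw [Real.div_rpow hF hε.le] at h
  calc k * (F * G) = ε * (k * (F / ε * G)) := by field_simp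
    _ ≤ _ := by gcongr

lemma ch_rpow_sub {a b p : ℝ} (ha : 0 ≤ a) (hb : 0 ≤ b) (hp : 1 ≤ p) :
    |a ^ p - b ^ p| ≤ p * (|a - b| * (a + b) ^ (p - 1)) := by
  wlog h : b ≤ a generalizing a b
  · have := this hb ha (by linarith)
    rwa [abs_sub_comm, abs_sub_comm a b, add_comm a b]
  rcases ha.eq_or_lt with rfl | ha'
  · have : b = 0 := by linarith
    subst this
    simp
  have h1 : b ^ p ≤ a ^ p := Real.rpow_le_rpow hb h (by linarith)
  rw [abs_of_nonneg (by linarith), abs_of_nonneg (by linarith)]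
  have h2 := one_add_mul_self_le_rpow_one_add (s := b / a - 1) (by
    have : 0 ≤ b / a := by positivity
    linarith) hp
  rw [add_sub_cancel, Real.div_rpow hb ha] at h2
  have h3 : a ^ (p - 1) * a = a ^ p := by
    rw [Real.rpow_sub_one ha'.ne']; field_simp
  have h4 : a ^ (p - 1) ≤ (a + b) ^ (p - 1) := Real.rpow_le_rpow ha (by linarith) (by linarith)
  have hap : 0 < a ^ p := by positivity
  have h5 : (1 + p * (b / a - 1)) * a ^ p ≤ b ^ p := by
    rwa [le_div_iff₀ hap] at h2
  have h6 : (1 + p * (b / a - 1)) * a ^ p = a ^ p - p * ((a - b) * a ^ (p - 1)) := by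
    rw [← h3]; field_simp; ring
  have h7 : p * ((a - b) * a ^ (p - 1)) ≤ p * ((a - b) * (a + b) ^ (p - 1)) := by
    gcongr
  linarith

lemma ch_kernel_int {N : ℕ} (hN : 3 ≤ N) {β : ℝ} (hβ : -(N : ℝ) < β) :
    Integrable ((Metric.ball (0 : EuclideanSpace ℝ (Fin N)) 1).indicator (fun z => ‖z‖ ^ β)) := by
  rw [integrable_indicator_iff measurableSet_ball]
  have : Nonempty (Fin N) := ⟨⟨0, by omega⟩⟩
  rw [integrableOn_fun_norm_addHaar volume (f := fun y : ℝ => y ^ β)]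
  simp only [finrank_euclideanSpace, Fintype.card_fin, smul_eq_mul]
  have : IntegrableOn (fun y : ℝ => y ^ ((N : ℝ) - 1 + β)) (Set.Ioo 0 1) := by
    have := intervalIntegral.intervalIntegrable_rpow' (a := 0) (b := 1) (r := (N : ℝ) - 1 + β)
      (by linarith)
    rw [intervalIntegrable_iff_integrableOn_Ioo_of_le zero_le_one] at this
    exact this
  refine this.congr_fun ?_ measurableSet_Ioo
  intro y hy
  simp only
  rw [Real.rpow_add hy.1, ← Real.rpow_natCast, Nat.cast_sub (by omega)]
  simp

lemma ch_kernel {N : ℕ} (hN : 3 ≤ N) {α r : ℝ} (hα : α < N) (hr1 : 1 < r) (hr2 : r < 2)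
    (hr : (N - α) * (r / (2 * (r - 1))) < N) :
    ∃ κ : ℝ, 0 ≤ κ ∧ ∀ F G : ChE N → ℝ, Continuous F → HasCompactSupport F →
      (∀ x, 0 ≤ F x) → Continuous G → HasCompactSupport G → (∀ x, 0 ≤ G x) →
      Integrable (fun z : ChE N × ChE N =>
        ‖z.1 - z.2‖ ^ (α - (N : ℝ)) * (F z.1 * G z.2)) (volume.prod volume) ∧
      ∀ ε > 0, ∫ z : ChE N × ChE N,
        ‖z.1 - z.2‖ ^ (α - (N : ℝ)) * (F z.1 * G z.2) ∂(volume.prod volume) ≤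
        (∫ x, F x) * (∫ x, G x) + ε * (κ * ((∫ x, F x ^ r) / ε ^ r) + κ * (∫ x, G x ^ r) +
          (∫ x, F x ^ r) / ε ^ r * (∫ x, G x ^ r)) := by
  set s := r / (2 * (r - 1))
  set K : ChE N → ℝ := (Metric.ball (0 : ChE N) 1).indicator (fun z => ‖z‖ ^ ((α - N) * s)) with hK
  have hKi : Integrable K := ch_kernel_int hN (by linarith)
  have hK0 : ∀ z, 0 ≤ K z := fun z => Set.indicator_nonneg (fun z _ => by positivity) z
  have hKs : ∀ z, K (-z) = K z := by
    intro z; simp [hK, Set.indicator]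
  refine ⟨∫ z, K z, integral_nonneg hK0, ?_⟩
  intro F G hFc hFs hF0 hGc hGs hG0
  have hpt : ∀ ε > 0, ∀ z : ChE N × ChE N, ‖z.1 - z.2‖ ^ (α - (N : ℝ)) * (F z.1 * G z.2) ≤
      F z.1 * G z.2 + ε * (K (z.1 - z.2) * F z.1 ^ r / ε ^ r + K (z.1 - z.2) * G z.2 ^ r +
        F z.1 ^ r * G z.2 ^ r / ε ^ r) := by
    intro ε hε z
    have f0 := hF0 z.1
    have g0 := hG0 z.2
    by_cases hz : z.1 - z.2 ∈ Metric.ball (0 : ChE N) 1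
    · have := ch_amgm hr1 hr2 f0 (k := ‖z.1 - z.2‖ ^ (α - (N : ℝ))) (by positivity) g0 hε
      rw [← Real.rpow_mul (norm_nonneg _)] at this
      have e : K (z.1 - z.2) = ‖z.1 - z.2‖ ^ ((α - N) * s) := by
        rw [hK, Set.indicator_of_mem hz]
      rw [e]
      refine this.trans ?_
      have h0 : 0 ≤ F z.1 * G z.2 := by positivity
      have e2 : ∀ A B : ℝ, A / ε ^ r * B = A * B / ε ^ r := fun A B => by ring
      rw [e2, ← mul_div_assoc]
      linarith
    · have h1 : ‖z.1 - z.2‖ ^ (α - (N : ℝ)) ≤ 1 := by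
        apply Real.rpow_le_one_of_one_le_of_nonpos
        · simpa using hz
        · linarith
      have := hK0 (z.1 - z.2)
      have h2 : 0 ≤ ε * (K (z.1 - z.2) * F z.1 ^ r / ε ^ r + K (z.1 - z.2) * G z.2 ^ r +
        F z.1 ^ r * G z.2 ^ r / ε ^ r) := by positivity
      have := mul_le_mul_of_nonneg_right h1 (mul_nonneg f0 g0)
      linarith
  have hr0 : r ≠ 0 := by linarith
  have hFi : Integrable F := hFc.integrable_of_hasCompactSupport hFs
  have hGi : Integrable G := hGc.integrable_of_hasCompactSupport hGs
  have hFr : Integrable (fun x => F x ^ r) :=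
    (hFc.rpow_const (fun _ => Or.inr (by linarith))).integrable_of_hasCompactSupport
      (hFs.comp_left (g := fun t : ℝ => t ^ r) (Real.zero_rpow hr0))
  have hGr : Integrable (fun x => G x ^ r) :=
    (hGc.rpow_const (fun _ => Or.inr (by linarith))).integrable_of_hasCompactSupport
      (hGs.comp_left (g := fun t : ℝ => t ^ r) (Real.zero_rpow hr0))
  have i1 : Integrable (fun z : ChE N × ChE N => F z.1 * G z.2) (volume.prod volume) := hFi.mul_prod hGi
  have i4 : Integrable (fun z : ChE N × ChE N => F z.1 ^ r * G z.2 ^ r) (volume.prod volume) :=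
    hFr.mul_prod hGr
  have i3 : Integrable (fun z : ChE N × ChE N => K (z.1 - z.2) * G z.2 ^ r) (volume.prod volume) := by
    have := hGr.convolution_integrand (ContinuousLinearMap.mul ℝ ℝ) hKi
    simpa [mul_comm] using this
  have i2' : ∀ H : ChE N → ℝ, Integrable H →
      Integrable (fun z : ChE N × ChE N => K (z.1 - z.2) * H z.1) (volume.prod volume) := by
    intro H hH
    have := (hH.convolution_integrand (ContinuousLinearMap.mul ℝ ℝ) hKi).swap
    refine this.congr (Filter.Eventually.of_forall fun z => ?_)
    simp [mul_comm, ← hKs (z.1 - z.2)]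
  have i2 := i2' _ hFr
  have v3 : ∫ z : ChE N × ChE N, K (z.1 - z.2) * G z.2 ^ r ∂(volume.prod volume)
      = (∫ z, K z) * ∫ x, G x ^ r := by
    rw [integral_prod_symm _ i3]
    simp only [integral_mul_const, integral_sub_right_eq_self K, integral_const_mul]
  have v2 : ∫ z : ChE N × ChE N, K (z.1 - z.2) * F z.1 ^ r ∂(volume.prod volume)
      = (∫ z, K z) * ∫ x, F x ^ r := by
    rw [integral_prod _ i2]
    simp only [integral_mul_const, integral_sub_left_eq_self K, integral_const_mul]
  have iR : ∀ ε : ℝ, Integrable (fun z : ChE N × ChE N => F z.1 * G z.2 + ε * (K (z.1 - z.2) * F z.1 ^ r / ε ^ r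
      + K (z.1 - z.2) * G z.2 ^ r + F z.1 ^ r * G z.2 ^ r / ε ^ r)) (volume.prod volume) := fun ε =>
    i1.add ((((i2.div_const _).add i3).add (i4.div_const _)).const_mul _)
  have iL : Integrable (fun z : ChE N × ChE N =>
        ‖z.1 - z.2‖ ^ (α - (N : ℝ)) * (F z.1 * G z.2)) (volume.prod volume) := by
    refine (iR 1).mono' ?_ ?_
    · apply Measurable.aestronglyMeasurable
      have := hFc.measurable
      have := hGc.measurable
      fun_prop
    · refine Filter.Eventually.of_forall fun z => ?_
      rw [Real.norm_of_nonneg]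
      · exact hpt 1 one_pos z
      · have f0 := hF0 z.1
        have g0 := hG0 z.2
        positivity
  refine ⟨iL, fun ε hε => (integral_mono iL (iR ε) (hpt ε hε)).trans_eq ?_⟩
  have j2 := i2.div_const (ε ^ r)
  have j4 := i4.div_const (ε ^ r)
  have j5 : Integrable (fun z : ChE N × ChE N => K (z.1 - z.2) * F z.1 ^ r / ε ^ r
      + K (z.1 - z.2) * G z.2 ^ r) (volume.prod volume) := j2.add i3
  have j6 : Integrable (fun z : ChE N × ChE N => K (z.1 - z.2) * F z.1 ^ r / ε ^ r
      + K (z.1 - z.2) * G z.2 ^ r + F z.1 ^ r * G z.2 ^ r / ε ^ r) (volume.prod volume) := j5.add j4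
  rw [integral_add i1 (j6.const_mul _), integral_const_mul, integral_add j5 j4,
    integral_add j2 i3, integral_div, integral_div, v2, v3,
    integral_prod_mul, integral_prod_mul (fun x => F x ^ r) (fun x => G x ^ r)]
  ring

lemma ch_grad {N : ℕ} (u : ChE N → ℂ) (x : ChE N) : ‖fderiv ℝ u x‖ ^ 2 ≤ gradSq u x := by
  have h0 : 0 ≤ gradSq u x := Finset.sum_nonneg fun i _ => by positivity
  have : ‖fderiv ℝ u x‖ ≤ √(gradSq u x) := by
    refine ContinuousLinearMap.opNorm_le_bound _ (Real.sqrt_nonneg _) fun w => ?_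
    have hw : w = ∑ i, w i • EuclideanSpace.single i (1 : ℝ) := by
      ext j
      simp [Pi.single_apply]
    calc ‖fderiv ℝ u x w‖ = ‖∑ i, w i • fderiv ℝ u x (EuclideanSpace.single i 1)‖ := by
          conv_lhs => rw [hw]
          simp only [map_sum, map_smul]
      _ ≤ ∑ i, ‖fderiv ℝ u x (EuclideanSpace.single i 1)‖ * ‖w i‖ := by
          refine (norm_sum_le _ _).trans (Finset.sum_le_sum fun i _ => ?_)
          rw [norm_smul, mul_comm]
      _ ≤ √(∑ i, ‖fderiv ℝ u x (EuclideanSpace.single i 1)‖ ^ 2) * √(∑ i, ‖w i‖ ^ 2) :=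
          Real.sum_mul_le_sqrt_mul_sqrt _ _ _
      _ = _ := by rw [EuclideanSpace.norm_eq w]; rfl
  calc ‖fderiv ℝ u x‖ ^ 2 ≤ √(gradSq u x) ^ 2 := by gcongr
    _ = _ := Real.sq_sqrt h0

def ChAdm {N : ℕ} (M : ℝ) (u : ChE N → ℂ) : Prop :=
  ContDiff ℝ (⊤ : ℕ∞) u ∧ HasCompactSupport u ∧ H1Norm u ≤ M

lemma ch_int {N : ℕ} {u : ChE N → ℂ} {M : ℝ} (hu : ChAdm M u) {q : ℝ} (hq : 0 < q) :
    Integrable (fun x => ‖u x‖ ^ q) :=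
  (hu.1.continuous.norm.rpow_const (fun _ => Or.inr hq.le)).integrable_of_hasCompactSupport
    (hu.2.1.comp_left (g := fun t : ℂ => ‖t‖ ^ q) (by simp [Real.zero_rpow hq.ne']))

lemma ch_gint {N : ℕ} {u : ChE N → ℂ} (hD : Continuous (fderiv ℝ u))
    (hDs : HasCompactSupport (fderiv ℝ u)) : Integrable (fun x => gradSq u x) := by
  have hcg : Continuous (fun x => gradSq u x) :=
    continuous_finsetSum _ fun i _ => ((hD.clm_apply continuous_const).norm.pow 2)
  refine hcg.integrable_of_hasCompactSupport ?_
  refine HasCompactSupport.intro hDs (fun x hx => ?_)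
  have hx0 : fderiv ℝ u x = 0 := image_eq_zero_of_notMem_tsupport hx
  refine Finset.sum_eq_zero fun i _ => ?_
  rw [hx0]
  simp

lemma ch_H1 {N : ℕ} {u : ChE N → ℂ} {M : ℝ} (hM : 0 < M) (hu : ChAdm M u) :
    ∫ x, ‖u x‖ ^ (2 : ℝ) ≤ M ^ 2 ∧ ∫ x, ‖fderiv ℝ u x‖ ^ (2 : ℝ) ≤ M ^ 2 := by
  have hc := hu.1
  have hs := hu.2.1
  have hh := hu.2.2
  have hD : Continuous (fderiv ℝ u) := hc.continuous_fderiv (by simp)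
  have hDs : HasCompactSupport (fderiv ℝ u) := hs.fderiv ℝ
  have c1 : Continuous (fun x => ‖u x‖ ^ 2) := by fun_prop
  have c2 : Continuous (fun x => ‖fderiv ℝ u x‖ ^ 2) := by fun_prop
  have i1 : Integrable (fun x => ‖u x‖ ^ 2) :=
    c1.integrable_of_hasCompactSupport (HasCompactSupport.intro hs fun x hx => by
      rw [image_eq_zero_of_notMem_tsupport hx]; simp)
  have i2 : Integrable (fun x => ‖fderiv ℝ u x‖ ^ 2) :=
    c2.integrable_of_hasCompactSupport (HasCompactSupport.intro hDs fun x hx => by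
      rw [image_eq_zero_of_notMem_tsupport hx]; simp)
  have i3 : Integrable (fun x => gradSq u x) := ch_gint hD hDs
  have h0 : ∀ x, 0 ≤ gradSq u x := fun x => Finset.sum_nonneg fun i _ => by positivity
  have hle : ∫ x, (‖u x‖ ^ 2 + gradSq u x) ≤ M ^ 2 := by
    unfold H1Norm at hh
    rwa [Real.sqrt_le_left hM.le] at hh
  rw [integral_add i1 i3] at hle
  have a1 : 0 ≤ ∫ x, ‖u x‖ ^ 2 := integral_nonneg fun x => by positivity
  have a2 : 0 ≤ ∫ x, gradSq u x := integral_nonneg h0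
  have a3 : ∫ x, ‖fderiv ℝ u x‖ ^ 2 ≤ ∫ x, gradSq u x := integral_mono i2 i3 (ch_grad u)
  simp only [Real.rpow_two]
  exact ⟨(le_add_of_nonneg_right a2).trans hle, a3.trans ((le_add_of_nonneg_left a1).trans hle)⟩

lemma ch_sob {N : ℕ} (hN : 3 ≤ N) {M : ℝ} (hM : 0 < M) : ∃ S : ℝ, ∀ u : ChE N → ℂ, ChAdm M u →
    ∫ x, ‖u x‖ ^ (2 * N / (N - 2) : ℝ) ≤ S := by
  have hN' : (3 : ℝ) ≤ N := by exact_mod_cast hN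
  have hσ : 0 < (2 * N / (N - 2) : ℝ) := div_pos (by linarith) (by linarith)
  set σ : ℝ := 2 * N / (N - 2) with hσd
  set σ' : NNReal := ⟨σ, hσ.le⟩ with hσ'
  set C : ℝ := (SNormLESNormFDerivOfEqConst ℂ (volume : Measure (ChE N)) ((2 : NNReal) : ℝ) : ℝ)
  refine ⟨(C * (M ^ 2) ^ (2 : ℝ)⁻¹) ^ σ, fun u hu => ?_⟩
  obtain ⟨hc, hs, hh⟩ := id hu
  have hD : Continuous (fderiv ℝ u) := hc.continuous_fderiv (by simp)
  have hDs : HasCompactSupport (fderiv ℝ u) := hs.fderiv ℝ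
  have h := eLpNorm_le_eLpNorm_fderiv_of_eq (volume : Measure (ChE N)) (u := u)
    (hc.of_le (by simp)) hs (p := 2) (p' := σ') (by norm_num)
    (by simp; omega) (by
      have e : (σ' : ℝ) = 2 * N / (N - 2) := rfl
      rw [e]
      simp only [finrank_euclideanSpace, Fintype.card_fin]
      have : (N : ℝ) - 2 ≠ 0 := by linarith
      have : (N : ℝ) ≠ 0 := by linarith
      push_cast
      field_simp)
  have m1 : MemLp u (σ' : ENNReal) := hc.continuous.memLp_of_hasCompactSupport hs
  have m2 : MemLp (fderiv ℝ u) ((2 : NNReal) : ENNReal) := hD.memLp_of_hasCompactSupport hDs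
  have hσ0 : (σ' : ENNReal) ≠ 0 := by
    simp only [ne_eq, ENNReal.coe_eq_zero]
    intro h
    have : (σ' : ℝ) = 0 := by rw [h]; rfl
    exact hσ.ne' this
  rw [m1.eLpNorm_eq_integral_rpow_norm hσ0 ENNReal.coe_ne_top,
    m2.eLpNorm_eq_integral_rpow_norm (by simp) ENNReal.coe_ne_top] at h
  have hb : 0 ≤ ∫ x, ‖fderiv ℝ u x‖ ^ (2 : ℝ) := integral_nonneg fun x => by positivity
  have ha : 0 ≤ ∫ x, ‖u x‖ ^ σ := integral_nonneg fun x => by positivity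
  have h2 : (∫ x, ‖u x‖ ^ σ) ^ σ⁻¹ ≤ C * (∫ x, ‖fderiv ℝ u x‖ ^ (2 : ℝ)) ^ (2 : ℝ)⁻¹ := by
    have := ENNReal.toReal_mono (by finiteness) h
    rw [ENNReal.toReal_mul] at this
    simp only [ENNReal.coe_toReal] at this
    rw [ENNReal.toReal_ofReal (by positivity), ENNReal.toReal_ofReal (by positivity)] at this
    exact this
  have hC : 0 ≤ C := NNReal.coe_nonneg _
  have h3 : (∫ x, ‖u x‖ ^ σ) ^ σ⁻¹ ≤ C * (M ^ 2) ^ (2 : ℝ)⁻¹ :=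
    h2.trans (by gcongr; exact (ch_H1 hM hu).2)
  calc ∫ x, ‖u x‖ ^ σ = ((∫ x, ‖u x‖ ^ σ) ^ σ⁻¹) ^ σ := by
        rw [← Real.rpow_mul ha, inv_mul_cancel₀ hσ.ne', Real.rpow_one]
    _ ≤ _ := by gcongr

lemma ch_intw {N : ℕ} {u v : ChE N → ℂ} {M : ℝ} (hu : ChAdm M u) (hv : ChAdm M v) {q : ℝ}
    (hq : 0 < q) : Integrable (fun x => (‖u x‖ + ‖v x‖) ^ q) := by
  have hs : HasCompactSupport (fun x => ‖u x‖ + ‖v x‖) := hu.2.1.norm.add hv.2.1.norm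
  exact ((hu.1.continuous.norm.add hv.1.continuous.norm).rpow_const
    (fun _ => Or.inr hq.le)).integrable_of_hasCompactSupport
    (hs.comp_left (g := fun t : ℝ => t ^ q) (by simp [Real.zero_rpow hq.ne']))

lemma ch_w {N : ℕ} (hN : 3 ≤ N) {M : ℝ} (hM : 0 < M) {q : ℝ} (hq2 : 2 ≤ q)
    (hq : q ≤ 2 * N / (N - 2)) : ∃ Q : ℝ, 0 < Q ∧ ∀ u v : ChE N → ℂ, ChAdm M u → ChAdm M v →
    ∫ x, (‖u x‖ + ‖v x‖) ^ q ≤ Q := by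
  obtain ⟨S, hS⟩ := ch_sob hN hM
  refine ⟨|2 ^ (q - 1) * ((M ^ 2 + S) + (M ^ 2 + S))| + 1, by positivity, fun u v hu hv => ?_⟩
  refine le_trans ?_ ((le_abs_self _).trans (le_add_of_nonneg_right zero_le_one))
  have hq0 : 0 < q := by linarith
  have hone : ∀ u : ChE N → ℂ, ChAdm M u → ∫ x, ‖u x‖ ^ q ≤ M ^ 2 + S := by
    intro u hu
    have j1 := ch_int hu (q := 2) (by norm_num)
    have j2 := ch_int hu (q := (2 * N / (N - 2) : ℝ)) (by linarith)
    calc ∫ x, ‖u x‖ ^ q ≤ ∫ x, (‖u x‖ ^ (2 : ℝ) + ‖u x‖ ^ (2 * N / (N - 2) : ℝ)) := by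
          refine integral_mono (ch_int hu hq0) (j1.add j2) fun x => ?_
          simp only
          have a1 : 0 ≤ ‖u x‖ ^ (2 : ℝ) := by positivity
          have a2 : 0 ≤ ‖u x‖ ^ (2 * N / (N - 2) : ℝ) := by positivity
          rcases le_total ‖u x‖ 1 with h | h
          · have := Real.rpow_le_rpow_of_exponent_ge' (norm_nonneg (u x)) h (by norm_num) hq2
            linarith
          · have := Real.rpow_le_rpow_of_exponent_le h hq
            linarith
      _ ≤ _ := by
          rw [integral_add j1 j2]
          exact add_le_add (ch_H1 hM hu).1 (hS u hu)
  calc ∫ x, (‖u x‖ + ‖v x‖) ^ q ≤ ∫ x, 2 ^ (q - 1) * (‖u x‖ ^ q + ‖v x‖ ^ q) := by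
        refine integral_mono (ch_intw hu hv hq0) (((ch_int hu hq0).add (ch_int hv hq0)).const_mul _)
          fun x => ?_
        exact_mod_cast NNReal.rpow_add_le_mul_rpow_add_rpow ‖u x‖₊ ‖v x‖₊ (by linarith)
    _ ≤ _ := by
        rw [integral_const_mul, integral_add (ch_int hu hq0) (ch_int hv hq0)]
        gcongr
        · exact hone u hu
        · exact hone v hv

lemma ch_d {N : ℕ} (hN : 3 ≤ N) {M : ℝ} (hM : 0 < M) {q : ℝ} (hq2 : 2 ≤ q)
    (hq : q < 2 * N / (N - 2)) {δ : ℝ} (hδ : 0 < δ) : ∃ C : ℝ, 0 < C ∧ ∀ u v : ChE N → ℂ,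
    ChAdm M u → ChAdm M v →
    Integrable (fun x => ‖u x - v x‖ * (‖u x‖ + ‖v x‖) ^ (q - 1)) ∧
    ∫ x, ‖u x - v x‖ * (‖u x‖ + ‖v x‖) ^ (q - 1) ≤ δ + C * √(∫ x, ‖u x - v x‖ ^ 2) := by
  set σ : ℝ := 2 * N / (N - 2)
  obtain ⟨Q2, hQ2, hQ2'⟩ := ch_w hN hM (q := 2) le_rfl (by linarith)
  obtain ⟨Qs, hQs, hQs'⟩ := ch_w hN hM (q := σ) (by linarith) le_rfl
  -- choose R
  obtain ⟨R, hR1, hR⟩ : ∃ R : ℝ, 1 ≤ R ∧ R ^ (q - σ) * Qs ≤ δ := by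
    have ht : Filter.Tendsto (fun R : ℝ => R ^ (-(σ - q)) * Qs) Filter.atTop (nhds (0 * Qs)) :=
      (tendsto_rpow_neg_atTop (by linarith)).mul_const _
    rw [zero_mul] at ht
    obtain ⟨R, h1, h2⟩ := ((ht.eventually_le_const hδ).and (Filter.eventually_ge_atTop 1)).exists
    exact ⟨R, h2, by rwa [neg_sub] at h1⟩
  have hR0 : 0 < R := by linarith
  refine ⟨R ^ (q - 2) * √Q2, by positivity, fun u v hu hv => ?_⟩
  have hdc : Continuous (fun x => ‖u x - v x‖) := (hu.1.continuous.sub hv.1.continuous).norm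
  have hwc : Continuous (fun x => ‖u x‖ + ‖v x‖) := hu.1.continuous.norm.add hv.1.continuous.norm
  have hds : HasCompactSupport (fun x => ‖u x - v x‖) := (hu.2.1.sub hv.2.1).norm
  have i0 : Integrable (fun x => ‖u x - v x‖ * (‖u x‖ + ‖v x‖) ^ (q - 1)) :=
    (hdc.mul (hwc.rpow_const fun _ => Or.inr (by linarith))).integrable_of_hasCompactSupport
      hds.mul_right
  have i1 : Integrable (fun x => ‖u x - v x‖ * (‖u x‖ + ‖v x‖)) :=
    (hdc.mul hwc).integrable_of_hasCompactSupport hds.mul_right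
  have i2 := ch_intw hu hv (q := σ) (by linarith)
  refine ⟨i0, ?_⟩
  have hpt : ∀ x, ‖u x - v x‖ * (‖u x‖ + ‖v x‖) ^ (q - 1) ≤
      R ^ (q - σ) * (‖u x‖ + ‖v x‖) ^ σ + R ^ (q - 2) * (‖u x - v x‖ * (‖u x‖ + ‖v x‖)) := by
    intro x
    have hd0 : 0 ≤ ‖u x - v x‖ := norm_nonneg _
    have hdw : ‖u x - v x‖ ≤ ‖u x‖ + ‖v x‖ := norm_sub_le _ _
    have hw0 : 0 ≤ ‖u x‖ + ‖v x‖ := by positivity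
    generalize ‖u x - v x‖ = d at *
    generalize ‖u x‖ + ‖v x‖ = w at *
    rcases hw0.eq_or_lt with rfl | hw
    · have : d = 0 := le_antisymm hdw hd0
      subst this
      rw [zero_mul]; positivity
    have e1 : w ^ (q - 1) = w ^ (q - 2) * w := by
      rw [← Real.rpow_add_one hw.ne']; congr 1; ring
    have n1 : 0 ≤ R ^ (q - σ) * w ^ σ := by positivity
    have n2 : 0 ≤ R ^ (q - 2) * (d * w) := by positivity
    rcases le_total w R with h | h
    · have : w ^ (q - 2) ≤ R ^ (q - 2) := Real.rpow_le_rpow hw0 h (by linarith)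
      rw [e1]
      nlinarith [mul_le_mul_of_nonneg_right this (mul_nonneg hd0 hw0)]
    · have : w ^ (q - σ) ≤ R ^ (q - σ) := Real.rpow_le_rpow_of_nonpos hR0 h (by linarith)
      have e2 : w * w ^ (q - 1) = w ^ (q - σ) * w ^ σ := by
        rw [← Real.rpow_add hw, mul_comm, ← Real.rpow_add_one hw.ne']; congr 1; ring
      calc d * w ^ (q - 1) ≤ w * w ^ (q - 1) := by gcongr
        _ = w ^ (q - σ) * w ^ σ := e2
        _ ≤ R ^ (q - σ) * w ^ σ := by gcongr
        _ ≤ _ := by linarith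
  have hCS : ∫ x, ‖u x - v x‖ * (‖u x‖ + ‖v x‖) ≤ √Q2 * √(∫ x, ‖u x - v x‖ ^ 2) := by
    have hws : HasCompactSupport (fun x => ‖u x‖ + ‖v x‖) := hu.2.1.norm.add hv.2.1.norm
    have := integral_mul_le_Lp_mul_Lq_of_nonneg (μ := (volume : Measure (ChE N)))
      (p := 2) (q := 2) Real.HolderConjugate.two_two
      (f := fun x => ‖u x - v x‖) (g := fun x => ‖u x‖ + ‖v x‖)
      (Filter.Eventually.of_forall fun x => norm_nonneg _)
      (Filter.Eventually.of_forall fun x => by positivity)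
      (hdc.memLp_of_hasCompactSupport hds) (hwc.memLp_of_hasCompactSupport hws)
    refine this.trans ?_
    rw [← Real.sqrt_eq_rpow, ← Real.sqrt_eq_rpow, mul_comm]
    simp only [Real.rpow_two]
    gcongr
    have := hQ2' u v hu hv
    simpa only [Real.rpow_two] using this
  calc _ ≤ ∫ x, (R ^ (q - σ) * (‖u x‖ + ‖v x‖) ^ σ +
          R ^ (q - 2) * (‖u x - v x‖ * (‖u x‖ + ‖v x‖))) :=
        integral_mono i0 ((i2.const_mul _).add (i1.const_mul _)) hpt
    _ = R ^ (q - σ) * (∫ x, (‖u x‖ + ‖v x‖) ^ σ) +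
          R ^ (q - 2) * ∫ x, ‖u x - v x‖ * (‖u x‖ + ‖v x‖) := by
        rw [integral_add (i2.const_mul _) (i1.const_mul _), integral_const_mul, integral_const_mul]
    _ ≤ R ^ (q - σ) * Qs + R ^ (q - 2) * (√Q2 * √(∫ x, ‖u x - v x‖ ^ 2)) := by
        gcongr
        exact hQs' u v hu hv
    _ ≤ _ := by rw [mul_assoc]; gcongr

lemma ch_ptw {a b d p r : ℝ} (ha : 0 ≤ a) (hb : 0 ≤ b) (hd : |a - b| ≤ d) (hdw : d ≤ a + b)
    (hp : 1 ≤ p) (hr : 1 ≤ r) :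
    |a ^ p - b ^ p| ^ r ≤ p ^ r * (d * (a + b) ^ (p * r - 1)) := by
  have hd0 : 0 ≤ d := (abs_nonneg _).trans hd
  have hw0 : 0 ≤ a + b := by positivity
  rcases hw0.eq_or_lt with hw | hw
  · have h1 : a = 0 := by linarith
    have h2 : b = 0 := by linarith
    subst h1 h2
    rw [sub_self, abs_zero, Real.zero_rpow (by linarith)]
    positivity
  rcases hd0.eq_or_lt with rfl | hdp
  · have : a = b := by
      have := abs_nonpos_iff.1 hd
      linarith
    subst this
    rw [sub_self, abs_zero, Real.zero_rpow (by linarith)]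
    positivity
  calc |a ^ p - b ^ p| ^ r ≤ (p * (d * (a + b) ^ (p - 1))) ^ r := by
        gcongr
        refine (ch_rpow_sub ha hb hp).trans ?_
        gcongr
    _ = p ^ r * (d * d ^ (r - 1) * (a + b) ^ ((p - 1) * r)) := by
        rw [Real.mul_rpow (by positivity) (by positivity), Real.mul_rpow (by positivity) (by positivity),
          ← Real.rpow_mul hw0]
        congr 3
        rw [mul_comm, ← Real.rpow_add_one hdp.ne']; congr 1; ring
    _ ≤ p ^ r * (d * (a + b) ^ (r - 1) * (a + b) ^ ((p - 1) * r)) := by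
        gcongr
    _ = _ := by
        rw [mul_assoc, ← Real.rpow_add hw]
        congr 3; ring

lemma ch_X {N : ℕ} (hN : 3 ≤ N) {M : ℝ} (hM : 0 < M) {p r : ℝ} (hp : 2 ≤ p) (hr : 1 ≤ r)
    (hq : p * r < 2 * N / (N - 2)) {δ : ℝ} (hδ : 0 < δ) : ∃ C : ℝ, 0 < C ∧ ∀ u v : ChE N → ℂ,
    ChAdm M u → ChAdm M v →
    ∫ x, |‖u x‖ ^ p - ‖v x‖ ^ p| ^ r ≤ δ + C * √(∫ x, ‖u x - v x‖ ^ 2) := by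
  have hpr : 0 < p ^ r := by positivity
  obtain ⟨C, hC, h⟩ := ch_d hN hM (q := p * r) (by nlinarith) hq (δ := δ / p ^ r) (by positivity)
  refine ⟨p ^ r * C, by positivity, fun u v hu hv => ?_⟩
  obtain ⟨i, h⟩ := h u v hu hv
  calc _ ≤ ∫ x, p ^ r * (‖u x - v x‖ * (‖u x‖ + ‖v x‖) ^ (p * r - 1)) := by
        refine integral_mono_of_nonneg (Filter.Eventually.of_forall fun x => by positivity)
          (i.const_mul _) (Filter.Eventually.of_forall fun x => ?_)
        exact ch_ptw (norm_nonneg _) (norm_nonneg _) (abs_norm_sub_norm_le _ _) (norm_sub_le _ _)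
          (by linarith) hr
    _ = p ^ r * ∫ x, (‖u x - v x‖ * (‖u x‖ + ‖v x‖) ^ (p * r - 1)) := integral_const_mul _ _
    _ ≤ p ^ r * (δ / p ^ r + C * √(∫ x, ‖u x - v x‖ ^ 2)) := by gcongr
    _ = _ := by field_simp

lemma ch_Q {N : ℕ} (hN : 3 ≤ N) {M : ℝ} (hM : 0 < M) {p r : ℝ} (hp : 2 ≤ p) (hr : 1 ≤ r)
    (hq : p * r < 2 * N / (N - 2)) : ∃ Q : ℝ, 0 < Q ∧ ∀ u : ChE N → ℂ,
    ChAdm M u → ∫ x, (‖u x‖ ^ p) ^ r ≤ Q := by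
  obtain ⟨Q, hQ, h⟩ := ch_w hN hM (q := p * r) (by nlinarith) hq.le
  refine ⟨Q, hQ, fun u hu => le_trans ?_ (h u u hu hu)⟩
  refine integral_mono_of_nonneg (Filter.Eventually.of_forall fun x => by positivity)
    (ch_intw hu hu (by nlinarith)) (Filter.Eventually.of_forall fun x => ?_)
  simp only
  rw [← Real.rpow_mul (norm_nonneg _)]
  have : 0 ≤ p * r := by nlinarith
  gcongr
  linarith [norm_nonneg (u x)]

lemma ch_term {N : ℕ} {α p : ℝ} {u : ChE N → ℂ}
    (hi : Integrable (fun z : ChE N × ChE N =>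
        ‖z.1 - z.2‖ ^ (α - (N : ℝ)) * (‖u z.1‖ ^ p * ‖u z.2‖ ^ p)) (volume.prod volume)) :
    choquardTerm N α p u = rieszConst N α * ∫ z : ChE N × ChE N,
        ‖z.1 - z.2‖ ^ (α - (N : ℝ)) * (‖u z.1‖ ^ p * ‖u z.2‖ ^ p) ∂(volume.prod volume) := by
  rw [integral_prod _ hi, ← integral_const_mul]
  unfold choquardTerm rieszConv
  refine integral_congr_ae (Filter.Eventually.of_forall fun x => ?_)
  simp only
  rw [← integral_mul_const, ← integral_const_mul]
  refine integral_congr_ae (Filter.Eventually.of_forall fun y => ?_)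
  simp only
  ring

lemma ch_diff {N : ℕ} {k : ChE N → ℝ} (hk : ∀ z, 0 ≤ k z) (hks : ∀ z, k (-z) = k z)
    {U V : ChE N → ℝ} (hU : ∀ x, 0 ≤ U x) (hV : ∀ x, 0 ≤ V x)
    (i1 : Integrable (fun z : ChE N × ChE N => k (z.1 - z.2) * (U z.1 * U z.2)) (volume.prod volume))
    (i2 : Integrable (fun z : ChE N × ChE N => k (z.1 - z.2) * (V z.1 * V z.2)) (volume.prod volume))
    (i3 : Integrable (fun z : ChE N × ChE N => k (z.1 - z.2) * (|U z.1 - V z.1| * U z.2))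
      (volume.prod volume))
    (i4 : Integrable (fun z : ChE N × ChE N => k (z.1 - z.2) * (|U z.1 - V z.1| * V z.2))
      (volume.prod volume)) :
    |(∫ z : ChE N × ChE N, k (z.1 - z.2) * (U z.1 * U z.2) ∂(volume.prod volume)) -
      ∫ z : ChE N × ChE N, k (z.1 - z.2) * (V z.1 * V z.2) ∂(volume.prod volume)| ≤
    (∫ z : ChE N × ChE N, k (z.1 - z.2) * (|U z.1 - V z.1| * U z.2) ∂(volume.prod volume)) +
      ∫ z : ChE N × ChE N, k (z.1 - z.2) * (|U z.1 - V z.1| * V z.2) ∂(volume.prod volume) := by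
  have e : (fun z : ChE N × ChE N => k (z.2 - z.1) * (|U z.2 - V z.2| * V z.1)) =
      fun z : ChE N × ChE N => k (z.1 - z.2) * (|U z.2 - V z.2| * V z.1) := by
    funext z
    rw [← hks, neg_sub]
  have i4' : Integrable (fun z : ChE N × ChE N => k (z.1 - z.2) * (|U z.2 - V z.2| * V z.1))
      (volume.prod volume) := by
    rw [← e]; exact i4.swap
  have v4 : ∫ z : ChE N × ChE N, k (z.1 - z.2) * (|U z.1 - V z.1| * V z.2) ∂(volume.prod volume) =
      ∫ z : ChE N × ChE N, k (z.1 - z.2) * (|U z.2 - V z.2| * V z.1) ∂(volume.prod volume) := by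
    rw [← e]
    exact (integral_prod_swap
      (fun z : ChE N × ChE N => k (z.1 - z.2) * (|U z.1 - V z.1| * V z.2))).symm
  rw [v4, ← integral_sub i1 i2, ← integral_add i3 i4']
  refine abs_integral_le_integral_abs.trans ?_
  refine integral_mono (i1.sub i2).abs (i3.add i4') fun z => ?_
  simp only [Pi.add_apply]
  have h1 : k (z.1 - z.2) * (U z.1 * U z.2) - k (z.1 - z.2) * (V z.1 * V z.2) =
      k (z.1 - z.2) * ((U z.1 - V z.1) * U z.2 + (U z.2 - V z.2) * V z.1) := by ring
  rw [h1, abs_mul, abs_of_nonneg (hk _), ← mul_add]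
  refine mul_le_mul_of_nonneg_left ?_ (hk _)
  refine (abs_add_le _ _).trans ?_
  rw [abs_mul, abs_mul, abs_of_nonneg (hU z.2), abs_of_nonneg (hV z.1)]

lemma ch_choose {N : ℕ} (hN : 3 ≤ N) {α p : ℝ} (hα0 : 0 < α) (hαN : α < N)
    (hp1 : 2 ≤ p) (hp2 : p < ((N : ℝ) + α) / ((N : ℝ) - 2)) :
    ∃ r : ℝ, 1 < r ∧ r < 2 ∧ (N - α) * (r / (2 * (r - 1))) < N ∧ p * r < 2 * N / (N - 2) := by
  have hN' : (3 : ℝ) ≤ N := by exact_mod_cast hN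
  have hN2 : (0 : ℝ) < N - 2 := by linarith
  rw [lt_div_iff₀ hN2] at hp2
  have h : 2 * (N : ℝ) / (N + α) < min 2 (2 * N / ((N - 2) * p)) := by
    rw [lt_min_iff]
    constructor
    · rw [div_lt_iff₀ (by linarith)]; linarith
    · apply div_lt_div_of_pos_left <;> nlinarith
  obtain ⟨r, h1, h2⟩ := exists_between h
  rw [lt_min_iff] at h2
  rw [div_lt_iff₀ (by linarith)] at h1
  have hp0 : 0 < (N - 2) * p := by positivity
  obtain ⟨h2, h3⟩ := h2
  rw [lt_div_iff₀ hp0] at h3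
  have hr1 : 1 < r := by
    by_contra hr
    nlinarith
  refine ⟨r, hr1, h2, ?_, ?_⟩
  · rw [mul_div_assoc', div_lt_iff₀ (by linarith)]
    nlinarith
  · rw [lt_div_iff₀ hN2]
    nlinarith

/-- Hölder-like continuity (condition G3) of the nonlocal Choquard energy
with respect to the `L²` norm on `H¹`-bounded sets. -/
theorem choquard_energy_G3 (N : ℕ) (hN : 3 ≤ N) (α p : ℝ)
    (hα1 : max ((N : ℝ) - 4) 0 < α) (hαN : α < N)
    (hp1 : 2 ≤ p) (hp2 : p < ((N : ℝ) + α) / ((N : ℝ) - 2)) :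
    ∀ M > (0 : ℝ), ∀ δ > (0 : ℝ), ∃ C > (0 : ℝ),
      ∀ u v : EuclideanSpace ℝ (Fin N) → ℂ,
        ContDiff ℝ (⊤ : ℕ∞) u → HasCompactSupport u →
        ContDiff ℝ (⊤ : ℕ∞) v → HasCompactSupport v →
        H1Norm u ≤ M → H1Norm v ≤ M →
        |choquardTerm N α p u - choquardTerm N α p v| ≤
          δ + C * Real.sqrt (∫ x, ‖u x - v x‖ ^ 2) := by
  intro M hM δ hδ
  obtain ⟨r, hr1, hr2, hrk, hpr⟩ := ch_choose hN (lt_of_le_of_lt (le_max_right _ _) hα1) hαN hp1 hp2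
  have hp1' : p * 1 < 2 * N / (N - 2) := lt_of_le_of_lt (by nlinarith) hpr
  obtain ⟨κ, hκ, hker⟩ := ch_kernel hN hαN hr1 hr2 hrk
  obtain ⟨Q1, hQ1, hQ1'⟩ := ch_Q hN hM hp1 le_rfl hp1'
  obtain ⟨Qr, hQr, hQr'⟩ := ch_Q hN hM hp1 hr1.le hpr
  set c : ℝ := |rieszConst N α| with hc
  have hc0 : 0 ≤ c := abs_nonneg _
  obtain ⟨ε, hε, hεδ⟩ : ∃ ε : ℝ, 0 < ε ∧ 2 * c * (ε * (κ * Qr)) ≤ δ / 2 := by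
    refine ⟨δ / (4 * (c * κ * Qr + 1)), by positivity, ?_⟩
    have : 2 * c * (δ / (4 * (c * κ * Qr + 1)) * (κ * Qr)) =
      δ / 2 * (c * κ * Qr / (c * κ * Qr + 1)) := by field_simp; ring
    rw [this]
    have h1 : c * κ * Qr / (c * κ * Qr + 1) ≤ 1 := by
      rw [div_le_one (by positivity)]; linarith
    nlinarith
  set A1 : ℝ := 2 * c * Q1
  set A2 : ℝ := 2 * c * (ε * (κ + Qr) / ε ^ r)
  have hA1 : 0 ≤ A1 := by positivity
  have hA2 : 0 ≤ A2 := by positivity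
  have hsm : ∀ A : ℝ, 0 ≤ A → A * (δ / (4 * (A + 1))) ≤ δ / 4 := by
    intro A hA
    have : A * (δ / (4 * (A + 1))) = δ / 4 * (A / (A + 1)) := by field_simp
    rw [this]
    have h1 : A / (A + 1) ≤ 1 := by
      rw [div_le_one (by positivity)]; linarith
    nlinarith
  obtain ⟨C1, hC1, hX1⟩ := ch_X hN hM hp1 le_rfl hp1' (δ := δ / (4 * (A1 + 1))) (by positivity)
  obtain ⟨C2, hC2, hX2⟩ := ch_X hN hM hp1 hr1.le hpr (δ := δ / (4 * (A2 + 1))) (by positivity)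
  refine ⟨A1 * C1 + A2 * C2 + 1, by positivity, fun u v huc hus hvc hvs huH hvH => ?_⟩
  have hu : ChAdm M u := ⟨huc, hus, huH⟩
  have hv : ChAdm M v := ⟨hvc, hvs, hvH⟩
  have hp0 : 0 < p := by linarith
  have cU : ∀ u : ChE N → ℂ, ChAdm M u → Continuous (fun x => ‖u x‖ ^ p) ∧
      HasCompactSupport (fun x => ‖u x‖ ^ p) := fun u hu =>
    ⟨hu.1.continuous.norm.rpow_const (fun _ => Or.inr hp0.le),
      hu.2.1.comp_left (g := fun t : ℂ => ‖t‖ ^ p) (by simp [Real.zero_rpow hp0.ne'])⟩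
  obtain ⟨cu, su⟩ := cU u hu
  obtain ⟨cv, sv⟩ := cU v hv
  have cf : Continuous (fun x => |‖u x‖ ^ p - ‖v x‖ ^ p|) := (cu.sub cv).abs
  have sf : HasCompactSupport (fun x => |‖u x‖ ^ p - ‖v x‖ ^ p|) := (su.sub sv).norm
  have nu : ∀ x, 0 ≤ ‖u x‖ ^ p := fun x => by positivity
  have nv : ∀ x, 0 ≤ ‖v x‖ ^ p := fun x => by positivity
  have nf : ∀ x, 0 ≤ |‖u x‖ ^ p - ‖v x‖ ^ p| := fun x => abs_nonneg _
  obtain ⟨i1, -⟩ := hker _ _ cu su nu cu su nu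
  obtain ⟨i2, -⟩ := hker _ _ cv sv nv cv sv nv
  obtain ⟨i3, b3⟩ := hker _ _ cf sf nf cu su nu
  obtain ⟨i4, b4⟩ := hker _ _ cf sf nf cv sv nv
  have hd := ch_diff (k := fun z : ChE N => ‖z‖ ^ (α - (N : ℝ))) (fun z => by positivity)
    (fun z => by simp) nu nv i1 i2 i3 i4
  have b3 := b3 ε hε
  have b4 := b4 ε hε
  have x1 := hX1 u v hu hv
  have x2 := hX2 u v hu hv
  have q1u := hQ1' u hu
  have q1v := hQ1' v hv
  have q2u := hQr' u hu
  have q2v := hQr' v hv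
  simp only [Real.rpow_one] at x1 q1u q1v
  have X1n : 0 ≤ ∫ x, |‖u x‖ ^ p - ‖v x‖ ^ p| := integral_nonneg nf
  have X2n : 0 ≤ ∫ x, |‖u x‖ ^ p - ‖v x‖ ^ p| ^ r := integral_nonneg fun x => by positivity
  rw [ch_term i1, ch_term i2, ← mul_sub, abs_mul]
  refine (mul_le_mul_of_nonneg_left (hd.trans (add_le_add b3 b4)) hc0).trans ?_
  clear hd b3 b4 i1 i2 i3 i4
  generalize (∫ x, |‖u x‖ ^ p - ‖v x‖ ^ p|) = X1 at *
  generalize (∫ x, |‖u x‖ ^ p - ‖v x‖ ^ p| ^ r) = X2 at *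
  generalize (∫ x, ‖u x‖ ^ p) = a at *
  generalize (∫ x, ‖v x‖ ^ p) = b at *
  generalize (∫ x, (‖u x‖ ^ p) ^ r) = a' at *
  generalize (∫ x, (‖v x‖ ^ p) ^ r) = b' at *
  have hT : 0 ≤ √(∫ x, ‖u x - v x‖ ^ 2) := Real.sqrt_nonneg _
  generalize √(∫ x, ‖u x - v x‖ ^ 2) = T at *
  calc c * (X1 * a + ε * (κ * (X2 / ε ^ r) + κ * a' + X2 / ε ^ r * a') +
        (X1 * b + ε * (κ * (X2 / ε ^ r) + κ * b' + X2 / ε ^ r * b')))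
      ≤ c * (X1 * Q1 + ε * (κ * (X2 / ε ^ r) + κ * Qr + X2 / ε ^ r * Qr) +
        (X1 * Q1 + ε * (κ * (X2 / ε ^ r) + κ * Qr + X2 / ε ^ r * Qr))) := by gcongr
    _ = 2 * c * (ε * (κ * Qr)) + A1 * X1 + A2 * X2 := by simp only [A1, A2]; ring
    _ ≤ δ / 2 + A1 * (δ / (4 * (A1 + 1)) + C1 * T) + A2 * (δ / (4 * (A2 + 1)) + C2 * T) := by gcongr
    _ ≤ δ + (A1 * C1 + A2 * C2 + 1) * T := by
      have := hsm A1 hA1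
      have := hsm A2 hA2
      nlinarith
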